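/- arXiv:1001.0699 — 2 statements merged into one kernel-verified Lean document; each statement's English description precedes it below -/
import Mathlib

section
/- Let e, n, ξ, κ, τ, σ be a frame system of type {time, space, space} along an interval I, β the striction curve with β' = sinh σ · e + cosh σ · ξ, and φ(u,v) = β(u) + v·e(u), so that φ_u = sinh σ · e + cosh σ · ξ + vκ · n and φ_v = e. Then the coefficients of the first fundamental form satisfy E = g(φ_u, φ_u) = 1 + v²κ(u)², F = g(φ_u, φ_v) = −sinh σ(u), and G = g(φ_v, φ_v) = −1. -/
noncomputable section

/-- Lorentz metric on ℝ³: g(v,w) = v₁w₁ + v₂w₂ − v₃w₃. -/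
def lg (v w : Fin 3 → ℝ) : ℝ := v 0 * w 0 + v 1 * w 1 - v 2 * w 2

/-- Lorentzian cross product: v ∧ w = (v₃w₂ − v₂w₃, v₁w₃ − v₃w₁, v₁w₂ − v₂w₁). -/
def lcross (v w : Fin 3 → ℝ) : Fin 3 → ℝ :=
  ![v 2 * w 1 - v 1 * w 2, v 0 * w 2 - v 2 * w 0, v 0 * w 1 - v 1 * w 0]

/-- Determinant of the 3×3 matrix with rows a, b, c. -/
def ldet (a b c : Fin 3 → ℝ) : ℝ :=
  Matrix.det !![a 0, a 1, a 2; b 0, b 1, b 2; c 0, c 1, c 2]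

open LinearMap (BilinForm)

/-- Orthonormal triples of type {time, space, space} for a bilinear form `B`: the values of a frame
system at a single parameter. The triple need not span `V`, and no orientation is imposed. -/
structure IsTimeSpaceSpaceTriple {R V : Type*} [CommRing R] [AddCommGroup V] [Module R V]
    (B : BilinForm R V) (e n ξ : V) : Prop where
  apply_e_e : B e e = -1
  apply_n_n : B n n = 1
  apply_ξ_ξ : B ξ ξ = 1
  apply_e_n : B e n = 0
  apply_n_ξ : B n ξ = 0
  apply_ξ_e : B ξ e = 0

namespace IsTimeSpaceSpaceTriple

variable {R V : Type*} [CommRing R] [AddCommGroup V] [Module R V] {B : BilinForm R V} {e n ξ : V}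

theorem apply_combination_combination (h : IsTimeSpaceSpaceTriple B e n ξ) (hB : B.IsSymm)
    (a b c a' b' c' : R) :
    B (a • e + b • n + c • ξ) (a' • e + b' • n + c' • ξ) = -(a * a') + b * b' + c * c' := by
  have apply_n_e : B n e = 0 := (hB.eq n e).trans h.apply_e_n
  have apply_ξ_n : B ξ n = 0 := (hB.eq ξ n).trans h.apply_n_ξ
  have apply_e_ξ : B e ξ = 0 := (hB.eq e ξ).trans h.apply_ξ_e
  simp only [map_add, map_smul, LinearMap.add_apply, LinearMap.smul_apply, smul_eq_mul,
    h.apply_e_e, h.apply_n_n, h.apply_ξ_ξ, h.apply_e_n, h.apply_n_ξ, h.apply_ξ_e,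
    apply_n_e, apply_ξ_n, apply_e_ξ]
  ring

theorem apply_combination_e (h : IsTimeSpaceSpaceTriple B e n ξ) (hB : B.IsSymm) (a b c : R) :
    B (a • e + b • n + c • ξ) e = -a := by
  simpa using h.apply_combination_combination hB a b c 1 0 0

end IsTimeSpaceSpaceTriple

theorem IsTimeSpaceSpaceTriple.apply_sinh_cosh_self {V : Type*} [AddCommGroup V] [Module ℝ V]
    {B : BilinForm ℝ V} {e n ξ : V} (h : IsTimeSpaceSpaceTriple B e n ξ) (hB : B.IsSymm)
    (s b : ℝ) :
    B (Real.sinh s • e + b • n + Real.cosh s • ξ) (Real.sinh s • e + b • n + Real.cosh s • ξ) =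
      1 + b ^ 2 := by
  rw [h.apply_combination_combination hB]
  linear_combination Real.cosh_sq_sub_sinh_sq s

/-- The Lorentz metric `lg` as a bilinear form on `ℝ³`, given by its Gram matrix, so that facts
about general symmetric bilinear forms apply to it. -/
def lorentzForm : BilinForm ℝ (Fin 3 → ℝ) :=
  Matrix.toBilin' (Matrix.diagonal ![1, 1, -1])

theorem lorentzForm_apply (v w : Fin 3 → ℝ) : lorentzForm v w = lg v w := by
  simp [lorentzForm, lg, Matrix.toBilin'_apply', Matrix.mulVec_diagonal, dotProduct,
    Fin.sum_univ_three, sub_eq_add_neg]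

theorem isSymm_lorentzForm : lorentzForm.IsSymm where
  eq v w := by
    simp only [lorentzForm_apply, lg, mul_comm]

theorem isTimeSpaceSpaceTriple_lorentzForm {e n ξ : Fin 3 → ℝ}
    (hee : lg e e = -1) (hnn : lg n n = 1) (hξξ : lg ξ ξ = 1)
    (hen : lg e n = 0) (hnξ : lg n ξ = 0) (hξe : lg ξ e = 0) :
    IsTimeSpaceSpaceTriple lorentzForm e n ξ := by
  constructor <;> rwa [lorentzForm_apply]

theorem stmt8_general {V : Type*} [NormedAddCommGroup V] [NormedSpace ℝ V] {B : BilinForm ℝ V}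
    (hB : B.IsSymm) {e β : ℝ → V} {n ξ : V} {κ σ u : ℝ}
    (hframe : IsTimeSpaceSpaceTriple B (e u) n ξ)
    (he : HasDerivAt e (κ • n) u)
    (hβ : HasDerivAt β (Real.sinh σ • e u + Real.cosh σ • ξ) u) (v : ℝ) :
    B (deriv β u + v • deriv e u) (deriv β u + v • deriv e u) = 1 + v ^ 2 * κ ^ 2
      ∧ B (deriv β u + v • deriv e u) (e u) = -Real.sinh σ
      ∧ B (e u) (e u) = -1 := by
  have partial_u : deriv β u + v • deriv e u =
      Real.sinh σ • e u + (v * κ) • n + Real.cosh σ • ξ := by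
    rw [hβ.deriv, he.deriv, smul_smul, add_right_comm]
  rw [partial_u, ← mul_pow]
  exact ⟨hframe.apply_sinh_cosh_self hB σ (v * κ), hframe.apply_combination_e hB _ _ _,
    hframe.apply_e_e⟩

/-- First fundamental form coefficients of the timelike ruled surface M₂. -/
theorem stmt8
    (I : Set ℝ) (hI : IsOpen I)
    (e n ξ β : ℝ → Fin 3 → ℝ) (κ τ σ : ℝ → ℝ)
    (hde : ∀ u ∈ I, DifferentiableAt ℝ e u)
    (hdn : ∀ u ∈ I, DifferentiableAt ℝ n u)
    (hdξ : ∀ u ∈ I, DifferentiableAt ℝ ξ u)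
    (hdβ : ∀ u ∈ I, DifferentiableAt ℝ β u)
    (hκ0 : ∀ u ∈ I, κ u ≠ 0)
    (hee : ∀ u ∈ I, lg (e u) (e u) = -1)
    (hnn : ∀ u ∈ I, lg (n u) (n u) = 1)
    (hξξ : ∀ u ∈ I, lg (ξ u) (ξ u) = 1)
    (hen : ∀ u ∈ I, lg (e u) (n u) = 0)
    (hnξ : ∀ u ∈ I, lg (n u) (ξ u) = 0)
    (hξe : ∀ u ∈ I, lg (ξ u) (e u) = 0)
    (hc1 : ∀ u ∈ I, lcross (e u) (n u) = -ξ u)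
    (hc2 : ∀ u ∈ I, lcross (n u) (ξ u) = e u)
    (hc3 : ∀ u ∈ I, lcross (ξ u) (e u) = -n u)
    (hfe : ∀ u ∈ I, deriv e u = κ u • n u)
    (hfn : ∀ u ∈ I, deriv n u = κ u • e u - τ u • ξ u)
    (hfξ : ∀ u ∈ I, deriv ξ u = τ u • n u)
    (hβ' : ∀ u ∈ I, deriv β u = Real.sinh (σ u) • e u + Real.cosh (σ u) • ξ u) :
    ∀ u ∈ I, ∀ v : ℝ,
      lg (deriv β u + v • deriv e u) (deriv β u + v • deriv e u)
          = 1 + v ^ 2 * (κ u) ^ 2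
      ∧ lg (deriv β u + v • deriv e u) (e u) = -Real.sinh (σ u)
      ∧ lg (e u) (e u) = -1 := by
  intro u hu v
  have frame := isTimeSpaceSpaceTriple_lorentzForm
    (hee u hu) (hnn u hu) (hξξ u hu) (hen u hu) (hnξ u hu) (hξe u hu)
  simpa only [lorentzForm_apply] using stmt8_general isSymm_lorentzForm frame
    (hfe u hu ▸ (hde u hu).hasDerivAt) (hβ' u hu ▸ (hdβ u hu).hasDerivAt) v
end
end

section
/- (Lorentzian Lamarle formula for timelike ruled surfaces with spacelike base curve and timelike ruling, Theorem 5.1.) Let e, n, ξ, κ, τ, σ be a frame system of type {time, space, space} along an interval I with κ, τ, σ differentiable, β the striction curve with β' = sinh σ · e + cosh σ · ξ, and φ(u,v) = β(u) + v·e(u). Let η = (φ_u ∧ φ_v)/‖φ_u ∧ φ_v‖ be the unit normal. Then the Gaussian curvature K = (g(φ_uu,η)·g(φ_vv,η) − g(φ_uv,η)²) / (g(φ_u,φ_u)·g(φ_v,φ_v) − g(φ_u,φ_v)²) satisfies K = κ(u)² cosh²σ(u)/(cosh²σ(u) + v²κ(u)²)²; equivalently, with distribution parameter P = cosh σ(u)/κ(u),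 K = P²/(P² + v²)². -/
noncomputable section

/-!
Because `φ_vv = 0`, the curvature of a ruled surface only involves `g(φ_uv, η)`, which up to sign is
the triple product `det(φ_uv, φ_u, φ_v)` divided by `√|W|`, where `W = g(φ_u ∧ φ_v, φ_u ∧ φ_v)`.
The Lorentzian Lagrange identity says that the determinant of the first fundamental form is `-W`,
so `K = det(φ_uv, φ_u, φ_v)² / (W |W|)`. For a striction curve with `β' = s e + c ξ`, the part
`s e` along the ruling contributes to neither quantity: the determinant is `± κ c`, because a
Lorentz orthonormal frame has determinant `± 1`, and `W = c² + v² κ²`.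
-/

section LorentzAlgebra

variable (a b c : Fin 3 → ℝ) (r : ℝ)

lemma lg_comm : lg a b = lg b a := by
  simp only [lg]
  ring

lemma lg_add_left : lg (a + b) c = lg a c + lg b c := by
  simp only [lg, Pi.add_apply]
  ring

lemma lg_add_right : lg a (b + c) = lg a b + lg a c := by
  rw [lg_comm, lg_add_left, lg_comm b, lg_comm c]

lemma lg_smul_left : lg (r • a) b = r * lg a b := by
  simp only [lg, Pi.smul_apply, smul_eq_mul]
  ring

lemma lg_smul_right : lg a (r • b) = r * lg a b := by
  rw [lg_comm, lg_smul_left, lg_comm]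

lemma lg_zero_left : lg 0 a = 0 := by
  simp [lg]

lemma lg_lcross : lg a (lcross b c) = -ldet a b c := by
  simp only [lg, lcross, ldet, Matrix.det_fin_three, Matrix.of_apply, Matrix.cons_val]
  ring

lemma lg_lcross_self : lg (lcross a b) (lcross a b) = lg a b ^ 2 - lg a a * lg b b := by
  simp only [lg, lcross, Matrix.cons_val]
  ring

lemma ldet_sq_eq_neg_det_gram :
    ldet a b c ^ 2 =
      -Matrix.det !![lg a a, lg a b, lg a c; lg b a, lg b b, lg b c; lg c a, lg c b, lg c c] := by
  simp only [ldet, lg, Matrix.det_fin_three, Matrix.of_apply, Matrix.cons_val]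
  ring

lemma ldet_smul_linearCombination (k s t w : ℝ) :
    ldet (k • b) (s • a + t • c + w • b) a = k * t * ldet b c a := by
  simp only [ldet, Matrix.det_fin_three, Matrix.of_apply, Matrix.cons_val, Pi.add_apply,
    Pi.smul_apply, smul_eq_mul]
  ring

end LorentzAlgebra

/-- The Lorentzian unit normal `η = (φ_u ∧ φ_v) / ‖φ_u ∧ φ_v‖` of a surface with tangent vectors
`φ_u`, `φ_v`; it is `0` when `φ_u ∧ φ_v` is null. -/
def unitNormal (φu φv : Fin 3 → ℝ) : Fin 3 → ℝ :=
  (√|lg (lcross φu φv) (lcross φu φv)|)⁻¹ • lcross φu φv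

/-- The Gaussian curvature `K` at a point of a parametrized surface in Lorentzian 3-space, as a
function of the values there of the first and second partial derivatives of the parametrization. -/
def gaussCurvature (φu φv φuu φuv φvv : Fin 3 → ℝ) : ℝ :=
  (lg φuu (unitNormal φu φv) * lg φvv (unitNormal φu φv) - lg φuv (unitNormal φu φv) ^ 2) /
    (lg φu φu * lg φv φv - lg φu φv ^ 2)

lemma lg_unitNormal_sq (w φu φv : Fin 3 → ℝ) :
    lg w (unitNormal φu φv) ^ 2 =
      ldet w φu φv ^ 2 / |lg (lcross φu φv) (lcross φu φv)| := by
  rw [unitNormal, lg_smul_right, lg_lcross w, mul_pow, inv_pow, Real.sq_sqrt (abs_nonneg _), neg_sq,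
    inv_mul_eq_div]

theorem gaussCurvature_ruled (φu φv φuu φuv : Fin 3 → ℝ) :
    gaussCurvature φu φv φuu φuv 0 =
      ldet φuv φu φv ^ 2 / (lg (lcross φu φv) (lcross φu φv) *
        |lg (lcross φu φv) (lcross φu φv)|) := by
  have hden : lg φu φu * lg φv φv - lg φu φv ^ 2 = -lg (lcross φu φv) (lcross φu φv) := by
    rw [lg_lcross_self, neg_sub]
  rw [gaussCurvature, lg_zero_left, mul_zero, zero_sub, lg_unitNormal_sq, hden, neg_div_neg_eq,
    div_div, mul_comm |_|]

/-- A Lorentz orthonormal triple of type {time, space, space}, of either orientation. -/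
structure IsTimeSpaceSpaceFrame (e n ξ : Fin 3 → ℝ) : Prop where
  time_self : lg e e = -1
  normal_self : lg n n = 1
  binormal_self : lg ξ ξ = 1
  time_normal : lg e n = 0
  normal_binormal : lg n ξ = 0
  binormal_time : lg ξ e = 0

namespace IsTimeSpaceSpaceFrame

variable {e n ξ : Fin 3 → ℝ}

lemma ldet_sq (h : IsTimeSpaceSpaceFrame e n ξ) : ldet n ξ e ^ 2 = 1 := by
  rw [ldet_sq_eq_neg_det_gram, lg_comm n e, lg_comm ξ n, lg_comm e ξ, h.time_self, h.normal_self,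
    h.binormal_self, h.time_normal, h.normal_binormal, h.binormal_time]
  simp [Matrix.det_fin_three]

lemma lg_lcross_self (h : IsTimeSpaceSpaceFrame e n ξ) (s c w : ℝ) :
    lg (lcross (s • e + c • ξ + w • n) e) (lcross (s • e + c • ξ + w • n) e) =
      c ^ 2 + w ^ 2 := by
  simp only [_root_.lg_lcross_self, lg_add_left, lg_add_right, lg_smul_left, lg_smul_right,
    lg_comm n e, lg_comm ξ n, lg_comm e ξ, h.time_self, h.normal_self, h.binormal_self,
    h.time_normal, h.normal_binormal, h.binormal_time]
  ring

theorem gaussCurvature_ruled (h : IsTimeSpaceSpaceFrame e n ξ) (φuu : Fin 3 → ℝ)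
    (s c κ v : ℝ) :
    gaussCurvature (s • e + c • ξ + v • κ • n) e φuu (κ • n) 0 =
      κ ^ 2 * c ^ 2 / (c ^ 2 + v ^ 2 * κ ^ 2) ^ 2 := by
  have hW : 0 ≤ c ^ 2 + (v * κ) ^ 2 := by positivity
  rw [smul_smul, _root_.gaussCurvature_ruled, h.lg_lcross_self, abs_of_nonneg hW,
    ldet_smul_linearCombination, mul_pow, h.ldet_sq, mul_one, mul_pow, mul_pow, ← sq]

end IsTimeSpaceSpaceFrame

lemma lamarle_quotient_eq_distributionParameter {c κ v : ℝ} (hκ : κ ≠ 0) (hcv : c ≠ 0 ∨ v ≠ 0) :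
    κ ^ 2 * c ^ 2 / (c ^ 2 + v ^ 2 * κ ^ 2) ^ 2 =
      (c / κ) ^ 2 / ((c / κ) ^ 2 + v ^ 2) ^ 2 := by
  have hD : c ^ 2 + v ^ 2 * κ ^ 2 ≠ 0 := by
    rcases hcv with hc | hv <;> positivity
  have hP : (c / κ) ^ 2 + v ^ 2 = (c ^ 2 + v ^ 2 * κ ^ 2) / κ ^ 2 := by
    field_simp
  rw [hP, div_eq_div_iff (pow_ne_zero 2 hD) (by positivity)]
  field_simp

theorem stmt10_general {e β : ℝ → Fin 3 → ℝ} {n ξ : Fin 3 → ℝ} {κ s c u v : ℝ}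
    (hframe : IsTimeSpaceSpaceFrame (e u) n ξ) (he : HasDerivAt e (κ • n) u)
    (hβ : HasDerivAt β (s • e u + c • ξ) u) (hκ : κ ≠ 0) (hcv : c ≠ 0 ∨ v ≠ 0)
    (φuu : Fin 3 → ℝ) :
    let K := gaussCurvature (deriv β u + v • deriv e u) (e u) φuu (deriv e u) 0
    K = κ ^ 2 * c ^ 2 / (c ^ 2 + v ^ 2 * κ ^ 2) ^ 2 ∧
      K = (c / κ) ^ 2 / ((c / κ) ^ 2 + v ^ 2) ^ 2 := by
  have hK := hframe.gaussCurvature_ruled φuu s c κ v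
  rw [he.deriv, hβ.deriv]
  exact ⟨hK, hK.trans (lamarle_quotient_eq_distributionParameter hκ hcv)⟩

/-- Lorentzian Lamarle formula for M₂ (Theorem 5.1):
K = κ² cosh²σ /(cosh²σ + v²κ²)² = P²/(P² + v²)² with P = cosh σ / κ. -/
theorem stmt10
    (I : Set ℝ) (hI : IsOpen I)
    (e n ξ β : ℝ → Fin 3 → ℝ) (κ τ σ : ℝ → ℝ)
    (hde : ∀ u ∈ I, DifferentiableAt ℝ e u)
    (hdn : ∀ u ∈ I, DifferentiableAt ℝ n u)
    (hdξ : ∀ u ∈ I, DifferentiableAt ℝ ξ u)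
    (hdβ : ∀ u ∈ I, DifferentiableAt ℝ β u)
    (hκ0 : ∀ u ∈ I, κ u ≠ 0)
    (hee : ∀ u ∈ I, lg (e u) (e u) = -1)
    (hnn : ∀ u ∈ I, lg (n u) (n u) = 1)
    (hξξ : ∀ u ∈ I, lg (ξ u) (ξ u) = 1)
    (hen : ∀ u ∈ I, lg (e u) (n u) = 0)
    (hnξ : ∀ u ∈ I, lg (n u) (ξ u) = 0)
    (hξe : ∀ u ∈ I, lg (ξ u) (e u) = 0)
    (hc1 : ∀ u ∈ I, lcross (e u) (n u) = -ξ u)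
    (hc2 : ∀ u ∈ I, lcross (n u) (ξ u) = e u)
    (hc3 : ∀ u ∈ I, lcross (ξ u) (e u) = -n u)
    (hfe : ∀ u ∈ I, deriv e u = κ u • n u)
    (hfn : ∀ u ∈ I, deriv n u = κ u • e u - τ u • ξ u)
    (hfξ : ∀ u ∈ I, deriv ξ u = τ u • n u)
    (hβ' : ∀ u ∈ I, deriv β u = Real.sinh (σ u) • e u + Real.cosh (σ u) • ξ u)
    (hdκ : ∀ u ∈ I, DifferentiableAt ℝ κ u)
    (hdτ : ∀ u ∈ I, DifferentiableAt ℝ τ u)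
    (hdσ : ∀ u ∈ I, DifferentiableAt ℝ σ u)
    (hd2e : ∀ u ∈ I, DifferentiableAt ℝ (deriv e) u)
    (hd2β : ∀ u ∈ I, DifferentiableAt ℝ (deriv β) u) :
    ∀ u ∈ I, ∀ v : ℝ,
      let φu := deriv β u + v • deriv e u
      let φv := e u
      let φuu := deriv (deriv β) u + v • deriv (deriv e) u
      let φuv := deriv e u
      let φvv : Fin 3 → ℝ := 0
      let c := lcross φu φv
      let η := (Real.sqrt |lg c c|)⁻¹ • c
      let K := (lg φuu η * lg φvv η - (lg φuv η) ^ 2)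
                / (lg φu φu * lg φv φv - (lg φu φv) ^ 2)
      K = (κ u) ^ 2 * (Real.cosh (σ u)) ^ 2
            / ((Real.cosh (σ u)) ^ 2 + v ^ 2 * (κ u) ^ 2) ^ 2
      ∧ K = (Real.cosh (σ u) / κ u) ^ 2
            / ((Real.cosh (σ u) / κ u) ^ 2 + v ^ 2) ^ 2 := by
  intro u hu v
  exact stmt10_general
    ⟨hee u hu, hnn u hu, hξξ u hu, hen u hu, hnξ u hu, hξe u hu⟩
    (hfe u hu ▸ (hde u hu).hasDerivAt) (hβ' u hu ▸ (hdβ u hu).hasDerivAt)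
    (hκ0 u hu) (.inl (Real.cosh_pos (σ u)).ne') _
end
end
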